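/- Let n ≥ 1 and let γ > 0. Then there exists a constant C = C(γ,n) > 0 such that for every Schwartz function u on ℝ^{n+1}, ‖u‖_{F̃⁰_{∞,1}} ≤ C (1 + ‖u‖_{F̃⁰_{∞,2}} (1 + (log⁺ ‖u‖_{F^γ_{∞,2}})^{1/2})). -/

import Mathlib

open MeasureTheory Real
open scoped FourierTransform ENNReal

noncomputable section

/-- The model space for `ℝ^{n+1}`: generic point `z = (x, t)` where the spatial
coordinates are `x i = z i.castSucc` (`i : Fin n`) and the time coordinate is
`t = z (Fin.last n)`. -/
abbrev PSpace (n : ℕ) := EuclideanSpace ℝ (Fin (n + 1))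

/-- The parabolic distance `‖z‖ₚ = max (maxᵢ |xᵢ|) √|t|` from `z` to the origin. -/
def pnorm {n : ℕ} (z : PSpace n) : ℝ :=
  max (⨆ i : Fin n, |z i.castSucc|) (Real.sqrt |z (Fin.last n)|)

/-- The parabolic cube of radius `r` centered at `z₀`. -/
def pCube {n : ℕ} (z₀ : PSpace n) (r : ℝ) : Set (PSpace n) :=
  {z | pnorm (z - z₀) < r}

/-- The set of mean oscillations `⨍_Q |u - u_Q|` of `u` over parabolic cubes `Q ⊆ O`. -/
def oscSet {n : ℕ} (O : Set (PSpace n)) (u : PSpace n → ℝ) : Set ℝ :=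
  {v | ∃ z₀ r, 0 < r ∧ pCube z₀ r ⊆ O ∧
    v = ⨍ z in pCube z₀ r, |u z - ⨍ w in pCube z₀ r, u w|}

/-- The parabolic BMO norm of `u` over `O`. -/
def pBMO {n : ℕ} (O : Set (PSpace n)) (u : PSpace n → ℝ) : ℝ := sSup (oscSet O u)

/-- The set of quantities `inf_c ⨍_Q |u - c|` over parabolic cubes `Q ⊆ O`. -/
def infOscSet {n : ℕ} (O : Set (PSpace n)) (u : PSpace n → ℝ) : Set ℝ :=
  {v | ∃ z₀ r, 0 < r ∧ pCube z₀ r ⊆ O ∧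
    v = ⨅ c : ℝ, ⨍ z in pCube z₀ r, |u z - c|}

/-- Time derivative `D_t u`. -/
def Dt {n : ℕ} (u : PSpace n → ℝ) : PSpace n → ℝ :=
  fun z => fderiv ℝ u z (EuclideanSpace.single (Fin.last n) 1)

/-- Spatial derivative in direction `i`. -/
def Dx {n : ℕ} (i : Fin n) (u : PSpace n → ℝ) : PSpace n → ℝ :=
  fun z => fderiv ℝ u z (EuclideanSpace.single i.castSucc 1)

/-- Spatial derivative `D_x^α` for a multi-index `α`. -/
def DxPow {n : ℕ} (α : Fin n → ℕ) (u : PSpace n → ℝ) : PSpace n → ℝ :=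
  (List.finRange n).foldr (fun i v => (Dx i)^[α i] v) u

/-- The mixed derivative `D_t^r D_x^α u`. -/
def mixDeriv {n : ℕ} (r : ℕ) (α : Fin n → ℕ) (u : PSpace n → ℝ) : PSpace n → ℝ :=
  Dt^[r] (DxPow α u)

/-- The `L²(O)` norm. -/
def L2norm {n : ℕ} (O : Set (PSpace n)) (v : PSpace n → ℝ) : ℝ :=
  (eLpNorm v 2 (volume.restrict O)).toReal

/-- The parabolic Sobolev norm `‖u‖_{W₂^{2m,m}(O)} = Σ_{2r+s ≤ 2m} Σ_{|α| = s}
‖D_t^r D_x^α u‖_{L²(O)}`. -/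
def sobNorm {n : ℕ} (m : ℕ) (O : Set (PSpace n)) (u : PSpace n → ℝ) : ℝ :=
  ∑ p ∈ (Finset.range (2 * m + 1) ×ˢ Finset.range (2 * m + 1)).filter
      (fun p => 2 * p.1 + p.2 ≤ 2 * m),
    ∑ α ∈ Finset.Nat.antidiagonalTuple n p.2, L2norm O (mixDeriv p.1 α u)

/-- `log⁺ x = max (log x) 0`. -/
def logPlus (x : ℝ) : ℝ := max (Real.log x) 0

/-- The domain `Ω_T = (0,1)ⁿ × (0,T)`. -/
def OmegaT (n : ℕ) (T : ℝ) : Set (PSpace n) :=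
  {z | (∀ i : Fin n, z i.castSucc ∈ Set.Ioo (0 : ℝ) 1) ∧ z (Fin.last n) ∈ Set.Ioo 0 T}

/-- The anisotropic dilation `η^a z = (η x, η² t)` with `a = (1,…,1,2)`. -/
def pdil {n : ℕ} (η : ℝ) (z : PSpace n) : PSpace n :=
  (EuclideanSpace.equiv (Fin (n + 1)) ℝ).symm
    (fun i => if i = Fin.last n then η ^ 2 * z i else η * z i)

/-- The anisotropic dyadic partition of unity `ψ_j` built from `ψ₀`:
`ψ_j z = ψ₀ (2^{-ja} z) - ψ₀ (2^{-(j-1)a} z)` for `j ≥ 1`. -/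
def psiJ {n : ℕ} (ψ₀ : PSpace n → ℝ) : ℕ → PSpace n → ℝ
  | 0 => ψ₀
  | (j + 1) => fun z =>
      ψ₀ (pdil ((2 : ℝ) ^ (-((j : ℝ) + 1))) z) - ψ₀ (pdil ((2 : ℝ) ^ (-(j : ℝ))) z)

/-- `φ_j = 𝓕⁻¹ ψ_j`, the inverse Fourier transform of `ψ_j`. -/
def phiJ {n : ℕ} (ψ₀ : PSpace n → ℝ) (j : ℕ) : PSpace n → ℂ :=
  𝓕⁻ (fun z => ((psiJ ψ₀ j z : ℝ) : ℂ))

/-- The convolution `(φ * u) z = ∫ φ (z - w) u w dw`. -/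
def pconv {n : ℕ} (φ : PSpace n → ℂ) (u : PSpace n → ℝ) (z : PSpace n) : ℂ :=
  ∫ w, φ (z - w) * (u w : ℂ)

/-- The truncated Lizorkin–Triebel norm `‖u‖_{F̃⁰_{∞,1}} = ‖Σ_{j≥1} |φ_j * u|‖_∞`. -/
def F01norm {n : ℕ} (ψ₀ : PSpace n → ℝ) (u : PSpace n → ℝ) : ℝ :=
  ⨆ z, ∑' j : ℕ, ‖pconv (phiJ ψ₀ (j + 1)) u z‖

/-- The truncated Lizorkin–Triebel norm `‖u‖_{F̃⁰_{∞,2}} = ‖(Σ_{j≥1} |φ_j * u|²)^{1/2}‖_∞`. -/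
def F02norm {n : ℕ} (ψ₀ : PSpace n → ℝ) (u : PSpace n → ℝ) : ℝ :=
  ⨆ z, Real.sqrt (∑' j : ℕ, ‖pconv (phiJ ψ₀ (j + 1)) u z‖ ^ 2)

/-- The Lizorkin–Triebel norm `‖u‖_{F^γ_{∞,2}} = ‖(Σ_{j≥0} 2^{2γj} |φ_j * u|²)^{1/2}‖_∞`. -/
def Fg2norm {n : ℕ} (ψ₀ : PSpace n → ℝ) (γ : ℝ) (u : PSpace n → ℝ) : ℝ :=
  ⨆ z, Real.sqrt (∑' j : ℕ, (2 : ℝ) ^ (2 * γ * j) * ‖pconv (phiJ ψ₀ j) u z‖ ^ 2)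

/-- The anisotropic Besov quasi-norm `‖u‖_{B^s_{p,q}}`. -/
def besovNorm {n : ℕ} (ψ₀ : PSpace n → ℝ) (s : ℝ) (p q : ℝ≥0∞) (u : PSpace n → ℝ) : ℝ :=
  if q = ∞ then ⨆ j : ℕ, (2 : ℝ) ^ (s * j) * (eLpNorm (pconv (phiJ ψ₀ j) u) p volume).toReal
  else (∑' j : ℕ, ((2 : ℝ) ^ (s * j) *
    (eLpNorm (pconv (phiJ ψ₀ j) u) p volume).toReal) ^ q.toReal) ^ (1 / q.toReal)

/-- The standing hypotheses on the cut-off function `ψ₀`: smooth, compactly supported,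
equal to `1` on `{‖z‖ₚ ≤ 1}` and to `0` on `{‖z‖ₚ ≥ 2}`. -/
structure IsCutoff {n : ℕ} (ψ₀ : PSpace n → ℝ) : Prop where
  smooth : ContDiff ℝ (⊤ : ℕ∞) ψ₀
  compact_support : HasCompactSupport ψ₀
  eq_one : ∀ z, pnorm z ≤ 1 → ψ₀ z = 1
  eq_zero : ∀ z, 2 ≤ pnorm z → ψ₀ z = 0

lemma pconv_fourier_bound {n : ℕ} (f : PSpace n → ℂ) (hf : Integrable f)
    (u : SchwartzMap (PSpace n) ℝ) (z : PSpace n) :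
    ‖pconv (𝓕⁻ f) u z‖ ≤ ∫ ξ, ‖f ξ‖ *
      ‖(𝓕 (SchwartzMap.postcompCLM (𝕜 := ℝ) Complex.ofRealCLM u) : SchwartzMap (PSpace n) ℂ) ξ‖ := by
  set U : SchwartzMap (PSpace n) ℂ := SchwartzMap.postcompCLM (𝕜 := ℝ) Complex.ofRealCLM u with hU
  have hUu : ∀ w, U w = (u w : ℂ) := fun w => rfl
  set g : PSpace n → ℂ := fun v => Real.fourierChar (inner ℝ v z) • f v with hg
  have hgi : Integrable g := by
    have := (Real.fourierIntegral_convergent_iff (μ := volume) (f := f) (-z)).2 hf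
    refine this.congr (Filter.Eventually.of_forall fun v => ?_)
    simp [hg]
  have h1 : ∀ w, (𝓕⁻ f) (z - w) = 𝓕 g w := by
    intro w
    rw [Real.fourierInv_eq, Real.fourier_eq]
    refine integral_congr_ae (Filter.Eventually.of_forall fun v => ?_)
    simp only [hg, inner_sub_right, smul_smul, ← AddChar.map_add_eq_mul]
    congr 2
    ring
  have h2 : pconv (𝓕⁻ f) u z = ∫ ξ, g ξ • 𝓕 (⇑U) ξ := by
    have := VectorFourier.integral_fourierIntegral_smul_eq_flip (μ := volume) (ν := volume)
      (L := innerₗ (PSpace n)) (f := g) (g := ⇑U) Real.continuous_fourierChar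
      (by exact continuous_inner) hgi U.integrable
    rw [flip_innerₗ] at this
    refine Eq.trans ?_ this
    unfold pconv
    refine integral_congr_ae (Filter.Eventually.of_forall fun w => ?_)
    simp only [h1, hUu, smul_eq_mul]
    rfl
  rw [h2]
  refine (norm_integral_le_integral_norm _).trans (le_of_eq ?_)
  refine integral_congr_ae (Filter.Eventually.of_forall fun v => ?_)
  simp only [hg, norm_smul, Circle.norm_smul, SchwartzMap.fourier_coe]

lemma pdil_apply {n : ℕ} (η : ℝ) (z : PSpace n) (i : Fin (n + 1)) :
    pdil η z i = if i = Fin.last n then η ^ 2 * z i else η * z i := rfl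

lemma continuous_pdil {n : ℕ} (η : ℝ) : Continuous (pdil (n := n) η) := by
  unfold pdil
  refine (EuclideanSpace.equiv (Fin (n + 1)) ℝ).symm.continuous.comp (continuous_pi fun i => ?_)
  split_ifs <;> fun_prop

lemma pdil_inv {n : ℕ} (η : ℝ) (h : η ≠ 0) (z : PSpace n) : pdil η⁻¹ (pdil η z) = z := by
  ext i
  simp only [pdil_apply]
  split_ifs <;> field_simp

lemma pnorm_pdil_le {n : ℕ} (η : ℝ) (h0 : 0 ≤ η) (h1 : η ≤ 1) (z : PSpace n)
    (hz : η * ‖z‖ ≤ 1) : pnorm (pdil η z) ≤ 1 := by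
  have hc : ∀ i, |z i| ≤ ‖z‖ := fun i => by
    simpa using PiLp.norm_apply_le z i
  unfold pnorm
  refine max_le (Real.iSup_le (fun i => ?_) zero_le_one) (Real.sqrt_le_one.2 ?_)
  · rw [pdil_apply, if_neg (Fin.castSucc_lt_last i).ne, abs_mul, abs_of_nonneg h0]
    exact (mul_le_mul_of_nonneg_left (hc _) h0).trans hz
  · rw [pdil_apply, if_pos rfl, abs_mul, abs_of_nonneg (sq_nonneg η)]
    refine (mul_le_mul ?_ (hc _) (abs_nonneg _) h0).trans hz
    nlinarith

lemma integrable_cut {n : ℕ} {ψ₀ : PSpace n → ℝ} (hψ : IsCutoff ψ₀) (η : ℝ) (h : η ≠ 0) :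
    Integrable (fun z => ψ₀ (pdil η z)) := by
  refine Continuous.integrable_of_hasCompactSupport
    (hψ.smooth.continuous.comp (continuous_pdil η)) ?_
  refine HasCompactSupport.of_support_subset_isCompact
    (hψ.compact_support.isCompact.image (continuous_pdil η⁻¹)) ?_
  intro z hz
  exact ⟨pdil η z, subset_tsupport _ hz, pdil_inv η h z⟩

lemma integrable_psiJ {n : ℕ} {ψ₀ : PSpace n → ℝ} (hψ : IsCutoff ψ₀) (j : ℕ) :
    Integrable (psiJ ψ₀ j) := by
  cases j with
  | zero => exact hψ.smooth.continuous.integrable_of_hasCompactSupport hψ.compact_support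
  | succ j =>
    exact (integrable_cut hψ _ (by positivity)).sub (integrable_cut hψ _ (by positivity))

lemma psiJ_bound {n : ℕ} {ψ₀ : PSpace n → ℝ} (hψ : IsCutoff ψ₀) (m : ℕ) :
    ∃ M : ℝ, 0 ≤ M ∧ ∀ j z, |psiJ ψ₀ j z| ≤ M * ((2:ℝ) ^ m)⁻¹ ^ j * (1 + ‖z‖ ^ m) := by
  obtain ⟨M, hM⟩ := hψ.compact_support.exists_bound_of_continuous hψ.smooth.continuous
  have hM0 : 0 ≤ M := (norm_nonneg _).trans (hM 0)
  have hM' : ∀ z, |ψ₀ z| ≤ M := hM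
  have h2m : (1:ℝ) ≤ 2 ^ m := one_le_pow₀ (by norm_num)
  refine ⟨2 * M * 2 ^ m, by positivity, fun j z => ?_⟩
  have hzm : 0 ≤ ‖z‖ ^ m := by positivity
  cases j with
  | zero =>
    simp only [psiJ, pow_zero, mul_one]
    have : M * 1 ≤ (2 * M * 2 ^ m) * (1 + ‖z‖ ^ m) := by
      apply mul_le_mul _ (by linarith) (by norm_num) (by positivity)
      nlinarith
    linarith [hM' z]
  | succ j =>
    by_cases hz : ‖z‖ ≤ 2 ^ j
    · have e : psiJ ψ₀ (j + 1) z = 0 := by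
        have a1 : (2:ℝ) ^ (-(j:ℝ)) = (2 ^ j)⁻¹ := by
          rw [Real.rpow_neg (by norm_num), Real.rpow_natCast]
        have a2 : (2:ℝ) ^ (-((j:ℝ) + 1)) = (2 ^ (j + 1))⁻¹ := by
          rw [Real.rpow_neg (by norm_num)]; exact_mod_cast rfl
        have p1 : (1:ℝ) ≤ 2 ^ j := one_le_pow₀ (by norm_num)
        have p2 : (1:ℝ) ≤ 2 ^ (j + 1) := one_le_pow₀ (by norm_num)
        simp only [psiJ, a1, a2]
        rw [hψ.eq_one, hψ.eq_one, sub_self]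
        · apply pnorm_pdil_le _ (by positivity) (inv_le_one_of_one_le₀ p1)
          rw [inv_mul_le_iff₀ (by positivity)]; linarith
        · apply pnorm_pdil_le _ (by positivity) (inv_le_one_of_one_le₀ p2)
          rw [inv_mul_le_iff₀ (by positivity), pow_succ]; linarith
      rw [e, abs_zero]; positivity
    · push Not at hz
      have hp : ((2:ℝ) ^ j) ^ m ≤ ‖z‖ ^ m := pow_le_pow_left₀ (by positivity) hz.le m
      have b1 : |psiJ ψ₀ (j + 1) z| ≤ 2 * M := by
        simp only [psiJ]
        refine (abs_sub _ _).trans ?_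
        linarith [hM' (pdil ((2 : ℝ) ^ (-((j : ℝ) + 1))) z), hM' (pdil ((2 : ℝ) ^ (-(j : ℝ))) z)]
      have b2 : 2 * M * 2 ^ m * ((2:ℝ) ^ m)⁻¹ ^ (j + 1) * (((2:ℝ) ^ j) ^ m) = 2 * M := by
        rw [← pow_mul, mul_comm j m, pow_mul, inv_pow]
        field_simp
        ring
      calc _ ≤ 2 * M := b1
        _ = _ := b2.symm
        _ ≤ _ := by gcongr; linarith

lemma pconv_decay {n : ℕ} {ψ₀ : PSpace n → ℝ} (hψ : IsCutoff ψ₀)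
    (u : SchwartzMap (PSpace n) ℝ) (m : ℕ) :
    ∃ K : ℝ, 0 ≤ K ∧ ∀ j z, ‖pconv (phiJ ψ₀ j) u z‖ ≤ K * ((2:ℝ) ^ m)⁻¹ ^ j := by
  obtain ⟨M, hM0, hM⟩ := psiJ_bound hψ m
  set V : SchwartzMap (PSpace n) ℂ :=
    𝓕 (SchwartzMap.postcompCLM (𝕜 := ℝ) Complex.ofRealCLM u) with hV
  have hi : Integrable (fun ξ => (1 + ‖ξ‖ ^ m) * ‖V ξ‖) := by
    have := V.integrable.norm.add (V.integrable_pow_mul volume m)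
    refine this.congr (Filter.Eventually.of_forall fun ξ => ?_)
    simp [add_mul]
  refine ⟨M * ∫ ξ, (1 + ‖ξ‖ ^ m) * ‖V ξ‖, mul_nonneg hM0 (integral_nonneg fun ξ => by positivity),
    fun j z => ?_⟩
  refine (pconv_fourier_bound _ (integrable_psiJ hψ j).ofReal u z).trans ?_
  have : M * (∫ ξ, (1 + ‖ξ‖ ^ m) * ‖V ξ‖) * ((2:ℝ) ^ m)⁻¹ ^ j
      = ∫ ξ, (M * ((2:ℝ) ^ m)⁻¹ ^ j) * ((1 + ‖ξ‖ ^ m) * ‖V ξ‖) := by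
    rw [integral_const_mul]; ring
  rw [this]
  refine integral_mono_of_nonneg (Filter.Eventually.of_forall fun ξ => by positivity)
    (hi.const_mul _) (Filter.Eventually.of_forall fun ξ => ?_)
  simp only [← mul_assoc]
  refine mul_le_mul_of_nonneg_right ?_ (norm_nonneg _)
  simpa using hM j ξ

/-- Pointwise estimate for sequences. -/
lemma seq_bound (γ : ℝ) (hγ : 0 < γ) (a : ℕ → ℝ) (ha : ∀ j, 0 ≤ a j) (hs : Summable a)
    (hs2 : Summable fun j => a j ^ 2)
    (A B : ℝ) (hA : √(∑' j, a j ^ 2) ≤ A) (hB0 : 0 ≤ B)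
    (hB : ∀ j, a j ≤ B * ((2:ℝ) ^ (-γ)) ^ j) :
    ∑' j, a j ≤ ((1 - (2:ℝ) ^ (-γ))⁻¹ + 1 + (√(γ * Real.log 2))⁻¹) *
      (1 + A * (1 + √(logPlus B))) := by
  set q : ℝ := (2:ℝ) ^ (-γ) with hq
  have hq0 : 0 < q := by positivity
  have hq1 : q < 1 := Real.rpow_lt_one_of_one_lt_of_neg (by norm_num) (by linarith)
  have hA0 : 0 ≤ A := (Real.sqrt_nonneg _).trans hA
  have hl2 : 0 < Real.log 2 := Real.log_pos (by norm_num)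
  set c := γ * Real.log 2 with hc
  have hc0 : 0 < c := by positivity
  have hL0 : 0 ≤ logPlus B := le_max_right _ _
  set L := logPlus B with hL
  set N := ⌈L / c⌉₊ with hN
  have hN1 : L / c ≤ N := Nat.le_ceil _
  have hN2 : (N:ℝ) ≤ L / c + 1 := (Nat.ceil_lt_add_one (by positivity)).le
  have hBN : B * q ^ N ≤ 1 := by
    rcases hB0.eq_or_lt with h | h
    · rw [← h]; simp
    · have e1 : q ^ N = Real.exp (-(c * N)) := by
        rw [hq, ← Real.rpow_natCast, ← Real.rpow_mul (by norm_num),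
          Real.rpow_def_of_pos (by norm_num)]
        congr 1; rw [hc]; ring
      have e2 : B = Real.exp (Real.log B) := (Real.exp_log h).symm
      rw [e1, e2, ← Real.exp_add]
      apply Real.exp_le_one_iff.2
      have : Real.log B ≤ L := le_max_left _ _
      rw [div_le_iff₀ hc0] at hN1
      linarith
  have h1 : ∑ j ∈ Finset.range N, a j ≤ √N * A := by
    have cs := sq_sum_le_card_mul_sum_sq (s := Finset.range N) (f := a)
    rw [Finset.card_range] at cs
    have t : ∑ j ∈ Finset.range N, a j ^ 2 ≤ ∑' j, a j ^ 2 :=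
      hs2.sum_le_tsum _ (fun j _ => sq_nonneg _)
    calc _ ≤ √(N * ∑' j, a j ^ 2) :=
          Real.le_sqrt_of_sq_le (cs.trans (mul_le_mul_of_nonneg_left t (by positivity)))
      _ = √N * √(∑' j, a j ^ 2) := Real.sqrt_mul (by positivity) _
      _ ≤ _ := by gcongr
  have h2 : ∑' j, a (j + N) ≤ (1 - q)⁻¹ := by
    rw [← tsum_geometric_of_lt_one hq0.le hq1]
    refine Summable.tsum_le_tsum (fun j => ?_) ((summable_nat_add_iff N).2 hs)
      (summable_geometric_of_lt_one hq0.le hq1)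
    calc _ ≤ _ := hB _
      _ = (B * q ^ N) * q ^ j := by rw [pow_add]; ring
      _ ≤ 1 * q ^ j := by gcongr
      _ = _ := one_mul _
  rw [← hs.sum_add_tsum_nat_add N]
  have h3 : √N ≤ 1 + (√c)⁻¹ * √L := by
    calc √N ≤ √(L / c + 1) := Real.sqrt_le_sqrt hN2
      _ ≤ √(L / c) + √1 := by
          apply Real.sqrt_le_iff.2 ⟨by positivity, ?_⟩
          have w1 := Real.sq_sqrt (show 0 ≤ L / c by positivity)
          have w2 := Real.sqrt_nonneg (L / c)
          rw [Real.sqrt_one]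
          nlinarith
      _ = _ := by rw [Real.sqrt_div hL0, Real.sqrt_one]; ring
  have hi0 : 0 < (√c)⁻¹ := inv_pos.2 (Real.sqrt_pos.2 hc0)
  have hq2 : 0 < (1 - q)⁻¹ := inv_pos.2 (by linarith)
  have hsL := Real.sqrt_nonneg L
  have h4 : √N * A ≤ (1 + (√c)⁻¹ * √L) * A := by gcongr
  have x1 := mul_nonneg hA0 hsL
  have x2 := mul_nonneg hi0.le hA0
  have x3 := mul_nonneg hq2.le hA0
  have x4 := mul_nonneg hq2.le x1
  nlinarith

/-- Step 2 of Lemma 2.9: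
`‖u‖_{F̃⁰_{∞,1}} ≤ C (1 + ‖u‖_{F̃⁰_{∞,2}} (1 + (log⁺ ‖u‖_{F^γ_{∞,2}})^{1/2}))`. -/
theorem basic_log_inequality_triebel (n : ℕ) (hn : 1 ≤ n) (γ : ℝ) (hγ : 0 < γ)
    (ψ₀ : PSpace n → ℝ) (hψ : IsCutoff ψ₀) :
    ∃ C : ℝ, 0 < C ∧ ∀ u : SchwartzMap (PSpace n) ℝ,
      F01norm ψ₀ ⇑u ≤ C * (1 + F02norm ψ₀ ⇑u *
        (1 + Real.sqrt (logPlus (Fg2norm ψ₀ γ ⇑u)))) := by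
  have hq1 : (2:ℝ) ^ (-γ) < 1 := Real.rpow_lt_one_of_one_lt_of_neg (by norm_num) (by linarith)
  refine ⟨(1 - (2:ℝ) ^ (-γ))⁻¹ + 1 + (√(γ * Real.log 2))⁻¹, ?_, fun u => ?_⟩
  · have : 0 < (1 - (2:ℝ) ^ (-γ))⁻¹ := inv_pos.2 (by linarith)
    positivity
  obtain ⟨m, hm⟩ := exists_nat_gt (γ + 1)
  have hm1 : 1 ≤ m := by
    have : (1:ℝ) < m := by linarith
    exact_mod_cast this.le
  obtain ⟨K, hK0, hK⟩ := pconv_decay hψ u m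
  set r : ℝ := ((2:ℝ) ^ m)⁻¹ with hr
  have hr0 : 0 < r := by positivity
  have hr1 : r < 1 := inv_lt_one_of_one_lt₀ (one_lt_pow₀ (by norm_num) (by omega))
  set p : ℝ := (2:ℝ) ^ (2 * γ) with hp
  have hp0 : 0 < p := by positivity
  have hpr : p * r ^ 2 < 1 := by
    have e : p * r ^ 2 = (2:ℝ) ^ (2 * γ - 2 * m) := by
      rw [Real.rpow_sub (by norm_num), hr, inv_pow, ← pow_mul, ← div_eq_mul_inv]
      congr 1
      rw [← Real.rpow_natCast]; push_cast; rw [mul_comm]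
    rw [e]
    exact Real.rpow_lt_one_of_one_lt_of_neg (by norm_num) (by linarith)
  have hpj : ∀ j : ℕ, (2:ℝ) ^ (2 * γ * j) = p ^ j := fun j => by
    rw [Real.rpow_mul (by norm_num), Real.rpow_natCast]
  have hbg : ∀ (z : PSpace n) (j : ℕ),
      (2:ℝ) ^ (2 * γ * j) * ‖pconv (phiJ ψ₀ j) u z‖ ^ 2 ≤ K ^ 2 * (p * r ^ 2) ^ j := by
    intro z j
    rw [hpj]
    calc _ ≤ p ^ j * (K * r ^ j) ^ 2 := by gcongr; exact hK j z
      _ = _ := by ring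
  have hb1 : ∀ (z : PSpace n) (j : ℕ), ‖pconv (phiJ ψ₀ (j + 1)) u z‖ ≤ K * r ^ j := by
    intro z j
    refine (hK _ _).trans ?_
    gcongr ?_ * ?_
    exact pow_le_pow_of_le_one hr0.le hr1.le (by omega)
  have hb2 : ∀ (z : PSpace n) (j : ℕ),
      ‖pconv (phiJ ψ₀ (j + 1)) u z‖ ^ 2 ≤ K ^ 2 * (r ^ 2) ^ j := by
    intro z j
    calc _ ≤ (K * r ^ j) ^ 2 := by gcongr; exact hb1 z j
      _ = _ := by ring
  have sg : Summable fun j : ℕ => K ^ 2 * (p * r ^ 2) ^ j :=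
    (summable_geometric_of_lt_one (by positivity) hpr).mul_left _
  have s1 : Summable fun j : ℕ => K * r ^ j :=
    (summable_geometric_of_lt_one hr0.le hr1).mul_left _
  have s2 : Summable fun j : ℕ => K ^ 2 * (r ^ 2) ^ j :=
    (summable_geometric_of_lt_one (by positivity) (by nlinarith)).mul_left _
  have tg : ∀ z, Summable fun j : ℕ => (2:ℝ) ^ (2 * γ * j) * ‖pconv (phiJ ψ₀ j) u z‖ ^ 2 :=
    fun z => sg.of_nonneg_of_le (fun j => by positivity) (hbg z)
  have t1 : ∀ z, Summable fun j : ℕ => ‖pconv (phiJ ψ₀ (j + 1)) u z‖ :=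
    fun z => s1.of_nonneg_of_le (fun j => by positivity) (hb1 z)
  have t2 : ∀ z, Summable fun j : ℕ => ‖pconv (phiJ ψ₀ (j + 1)) u z‖ ^ 2 :=
    fun z => s2.of_nonneg_of_le (fun j => by positivity) (hb2 z)
  have bdA : BddAbove (Set.range fun z => √(∑' j : ℕ, ‖pconv (phiJ ψ₀ (j + 1)) u z‖ ^ 2)) := by
    refine ⟨√(∑' j : ℕ, K ^ 2 * (r ^ 2) ^ j), ?_⟩
    rintro _ ⟨z, rfl⟩
    exact Real.sqrt_le_sqrt ((t2 z).tsum_le_tsum (hb2 z) s2)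
  have bdB : BddAbove (Set.range fun z =>
      √(∑' j : ℕ, (2:ℝ) ^ (2 * γ * j) * ‖pconv (phiJ ψ₀ j) u z‖ ^ 2)) := by
    refine ⟨√(∑' j : ℕ, K ^ 2 * (p * r ^ 2) ^ j), ?_⟩
    rintro _ ⟨z, rfl⟩
    exact Real.sqrt_le_sqrt ((tg z).tsum_le_tsum (hbg z) sg)
  have hB0 : 0 ≤ Fg2norm ψ₀ γ u := Real.iSup_nonneg fun z => Real.sqrt_nonneg _
  refine ciSup_le fun z => ?_
  refine seq_bound γ hγ _ (fun j => norm_nonneg _) (t1 z) (t2 z) _ _ (le_ciSup bdA z) hB0 ?_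
  intro j
  have hz : √(∑' j : ℕ, (2:ℝ) ^ (2 * γ * j) * ‖pconv (phiJ ψ₀ j) u z‖ ^ 2) ≤ Fg2norm ψ₀ γ u :=
    le_ciSup bdB z
  have h1 := (tg z).le_tsum (j + 1) (fun i _ => by positivity)
  have h3 : (2:ℝ) ^ (γ * (j + 1 : ℕ)) * ‖pconv (phiJ ψ₀ (j + 1)) u z‖ ≤ Fg2norm ψ₀ γ u := by
    refine le_trans (Real.le_sqrt_of_sq_le (le_trans (le_of_eq ?_) h1)) hz
    rw [mul_pow, ← Real.rpow_natCast ((2:ℝ) ^ (γ * (j + 1 : ℕ))), ← Real.rpow_mul (by norm_num)]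
    congr 2; push_cast; ring
  have h4 : (2:ℝ) ^ (γ * j) ≤ (2:ℝ) ^ (γ * (j + 1 : ℕ)) := by
    apply Real.rpow_le_rpow_of_exponent_le (by norm_num)
    push_cast; nlinarith
  have h5 : ((2:ℝ) ^ (-γ)) ^ j = ((2:ℝ) ^ (γ * j))⁻¹ := by
    rw [← Real.rpow_natCast, ← Real.rpow_mul (by norm_num), ← Real.rpow_neg (by norm_num)]
    congr 1; ring
  rw [h5, ← div_eq_mul_inv, le_div_iff₀ (by positivity), mul_comm]
  exact (mul_le_mul_of_nonneg_right h4 (norm_nonneg _)).trans h3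


end
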